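/- Let $n \geq 3$ and $W \in L^{n/2,1}(\mathbb{R}^n)$. Define recursively $G_0(x,y) = c_n|x-y|^{-(n-2)}$ and $G_j(x,y) = c_n\int_{\mathbb{R}^n} |x-z|^{-(n-2)} W(z) G_{j-1}(z,y)\,dz$ for $j \geq 1$. Then for every $j \geq 0$ and all $x \neq y$ one has $|G_j(x,y)| \leq C^j G_0(x,y)$, where $C = 2^{n-1} c_n \|a\|_{\frac{n}{n-2},\infty} \|W\|_{n/2,1}$ and $a(x) = |x|^{-(n-2)}$. -/

import Mathlib

open MeasureTheory ENNReal Filter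
open scoped ENNReal NNReal

noncomputable section

/-- Euclidean space `ℝⁿ`. -/
abbrev Rn (n : ℕ) : Type := EuclideanSpace ℝ (Fin n)

/-- The distribution function `d_f(t) = |{x : |f x| > t}|` (Lebesgue measure). -/
def distFun {n : ℕ} (f : Rn n → ℂ) (t : ℝ) : ℝ≥0∞ :=
  volume {x : Rn n | t < ‖f x‖}

/-- The Lorentz quasinorm `‖f‖_{p,q}` (valued in `ℝ≥0∞`).  For `q < ∞` it is
`p^{1/q} (∫_0^∞ t^{q-1} d_f(t)^{q/p} dt)^{1/q}`; for `q = ∞`, `p < ∞` it is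
`sup_{t>0} t · d_f(t)^{1/p}`; for `p = q = ∞` it is the essential supremum (`L^∞`). -/
def lorentzNorm {n : ℕ} (f : Rn n → ℂ) (p q : ℝ≥0∞) : ℝ≥0∞ :=
  if q = ∞ then
    if p = ∞ then essSup (fun x => (‖f x‖₊ : ℝ≥0∞)) volume
    else ⨆ (t : ℝ) (_ : 0 < t), ENNReal.ofReal t * distFun f t ^ (1 / p.toReal)
  else
    p ^ (1 / q.toReal) *
      (∫⁻ t in Set.Ioi (0 : ℝ),
        ENNReal.ofReal (t ^ (q.toReal - 1)) * distFun f t ^ (q.toReal / p.toReal)) ^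
        (1 / q.toReal)

/-- Membership in the Lorentz space `L^{p,q}(ℝⁿ)`. -/
def MemLorentz {n : ℕ} (f : Rn n → ℂ) (p q : ℝ≥0∞) : Prop :=
  AEStronglyMeasurable f volume ∧ lorentzNorm f p q < ∞

/-- The constant `c_n = 1/(n(n-2)|B(0,1)|)` for which `c_n |x|^{2-n}` is the fundamental
solution of `-Δ` on `ℝⁿ`. -/
def fundConst (n : ℕ) : ℝ :=
  1 / ((n : ℝ) * ((n : ℝ) - 2) * (volume (Metric.ball (0 : Rn n) 1)).toReal)

/-- The iterated kernels: `G_0(x,y) = c_n |x-y|^{2-n}` and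
`G_j(x,y) = c_n ∫ |x-z|^{2-n} W(z) G_{j-1}(z,y) dz`. -/
def greenIter (n : ℕ) (W : Rn n → ℂ) : ℕ → Rn n → Rn n → ℂ
  | 0 => fun x y => (fundConst n : ℂ) * (((‖x - y‖ ^ (n - 2))⁻¹ : ℝ) : ℂ)
  | j + 1 => fun x y =>
      (fundConst n : ℂ) *
        ∫ z : Rn n, (((‖x - z‖ ^ (n - 2))⁻¹ : ℝ) : ℂ) * W z * greenIter n W j z y

/-- The constant `C = 2^{n-1} c_n ‖a‖_{n/(n-2),∞} ‖W‖_{n/2,1}`, with `a(x) = |x|^{-(n-2)}`. -/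
def greenC (n : ℕ) (W : Rn n → ℂ) : ℝ≥0∞ :=
  ENNReal.ofReal (2 ^ (n - 1) * fundConst n) *
    lorentzNorm (fun v : Rn n => (((‖v‖ ^ (n - 2))⁻¹ : ℝ) : ℂ))
      ((n : ℝ≥0∞) / ((n : ℝ≥0∞) - 2)) ∞ *
    lorentzNorm W ((n : ℝ≥0∞) / 2) 1

/-- The kernel `|x - z|^{2-n}`, valued in `ℝ≥0∞` (with value `0` on the diagonal). -/
def rieszKernel {n : ℕ} (x z : Rn n) : ℝ≥0∞ :=
  ENNReal.ofReal (‖x - z‖ ^ (n - 2))⁻¹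

lemma measurable_rieszKernel {n : ℕ} (x : Rn n) : Measurable (rieszKernel x) := by
  unfold rieszKernel
  fun_prop

lemma rieszKernel_comm {n : ℕ} (x z : Rn n) : rieszKernel x z = rieszKernel z x := by
  rw [rieszKernel, rieszKernel, norm_sub_rev]

lemma cast_sub_two {n : ℕ} (hn : 3 ≤ n) : ((n - 2 : ℕ) : ℝ) = (n : ℝ) - 2 := by
  rw [Nat.cast_sub (by omega)]
  norm_num

lemma volume_superlevel_rieszKernel {n : ℕ} (hn : 3 ≤ n) (x : Rn n) {s : ℝ} (hs : 0 < s) :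
    volume {z : Rn n | s < (‖x - z‖ ^ (n - 2))⁻¹} =
      ENNReal.ofReal (s ^ (-((n : ℝ) / ((n : ℝ) - 2)))) * volume (Metric.ball (0 : Rn n) 1) := by
  have hn' : (3 : ℝ) ≤ n := by exact_mod_cast hn
  have hk : n - 2 ≠ 0 := by omega
  have : Nonempty (Fin n) := ⟨⟨0, by omega⟩⟩
  set r : ℝ := s ^ (-(1 / ((n : ℝ) - 2))) with hr
  have hr0 : 0 < r := Real.rpow_pos_of_pos hs _
  have hrk : r ^ (n - 2) = s⁻¹ := by
    rw [← Real.rpow_natCast, hr, ← Real.rpow_mul hs.le, cast_sub_two hn, ← Real.rpow_neg_one]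
    congr 1
    have : (n : ℝ) - 2 ≠ 0 := by linarith
    field_simp
  have hrn : r ^ n = s ^ (-((n : ℝ) / ((n : ℝ) - 2))) := by
    rw [← Real.rpow_natCast, hr, ← Real.rpow_mul hs.le]
    congr 1
    ring
  have hset : {z : Rn n | s < (‖x - z‖ ^ (n - 2))⁻¹} = Metric.ball x r \ {x} := by
    ext z
    simp only [Set.mem_ofPred_eq, Set.mem_sdiff, Metric.mem_ball, Set.mem_singleton_iff]
    rw [dist_comm, dist_eq_norm]
    by_cases hz : z = x
    · simp [hz, zero_pow hk, hs.le]
    · have hpos : 0 < ‖x - z‖ := norm_pos_iff.2 (sub_ne_zero.2 (Ne.symm hz))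
      rw [lt_inv_comm₀ hs (pow_pos hpos _), ← hrk, pow_lt_pow_iff_left₀ hpos.le hr0.le hk]
      simp [hz]
  rw [hset, measure_sdiff_null (measure_singleton x), Measure.addHaar_ball _ _ hr0.le, ← hrn]
  simp

/-- Integral of the largest function with distribution function at most
`min m (v s^{-p})`. -/
lemma lintegral_min_rpow_le {p v : ℝ} (hp : 1 < p) (hv : 0 < v) (m : ℝ≥0∞) :
    ∫⁻ s in Set.Ioi (0 : ℝ), min m (ENNReal.ofReal (s ^ (-p)) * ENNReal.ofReal v) ≤
      ENNReal.ofReal v ^ (1 / p) * ENNReal.ofReal (p / (p - 1)) * m ^ (1 - 1 / p) := by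
  have hp0 : 0 < p := by linarith
  have hp1 : 0 < p - 1 := by linarith
  have he : 0 < 1 - 1 / p := by
    rw [sub_pos, div_lt_one hp0]
    exact hp
  have hc : ENNReal.ofReal v ^ (1 / p) * ENNReal.ofReal (p / (p - 1)) ≠ 0 := by
    rw [ENNReal.ofReal_rpow_of_pos hv, ← ENNReal.ofReal_mul (by positivity)]
    exact (ENNReal.ofReal_pos.2 (by positivity)).ne'
  rcases eq_or_ne m ∞ with rfl | hm
  · rw [ENNReal.top_rpow_of_pos he, ENNReal.mul_top hc]
    exact le_top
  rcases eq_or_ne m 0 with rfl | hm0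
  · simp
  obtain ⟨μ, hμ, rfl⟩ : ∃ μ : ℝ, 0 < μ ∧ m = ENNReal.ofReal μ :=
    ⟨m.toReal, ENNReal.toReal_pos hm0 hm, (ENNReal.ofReal_toReal hm).symm⟩
  set s₀ : ℝ := (v / μ) ^ (1 / p) with hs₀
  have hs₀pos : 0 < s₀ := by positivity
  have hs₀p : s₀ ^ (-p) * v = μ := by
    rw [hs₀, ← Real.rpow_mul (by positivity)]
    have : 1 / p * -p = -1 := by field_simp
    rw [this, Real.rpow_neg_one]
    field_simp
  have hμs : μ * s₀ = v ^ (1 / p) * μ ^ (1 - 1 / p) := by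
    rw [hs₀, Real.div_rpow hv.le hμ.le, Real.rpow_sub hμ, Real.rpow_one]
    ring
  have hint : ∫⁻ s in Set.Ioi s₀, ENNReal.ofReal (s ^ (-p)) =
      ENNReal.ofReal (s₀ ^ (-p) * s₀ / (p - 1)) := by
    rw [← ofReal_integral_eq_lintegral_ofReal
      (integrableOn_Ioi_rpow_of_lt (by linarith) hs₀pos),
      integral_Ioi_rpow_of_lt (by linarith) hs₀pos, Real.rpow_add hs₀pos, Real.rpow_one,
      ← neg_div_neg_eq]
    · congr 1
      ring
    · filter_upwards [ae_restrict_mem measurableSet_Ioi] with s hs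
      exact Real.rpow_nonneg (hs₀pos.le.trans (le_of_lt hs)) _
  rw [← Set.Ioc_union_Ioi_eq_Ioi hs₀pos.le,
    lintegral_union measurableSet_Ioi (Set.Ioc_disjoint_Ioi le_rfl)]
  calc _ ≤ (∫⁻ _ in Set.Ioc 0 s₀, ENNReal.ofReal μ) +
        ∫⁻ s in Set.Ioi s₀, ENNReal.ofReal (s ^ (-p)) * ENNReal.ofReal v :=
        add_le_add (lintegral_mono fun _ => min_le_left _ _)
          (lintegral_mono fun _ => min_le_right _ _)
    _ = ENNReal.ofReal (μ * s₀ + s₀ ^ (-p) * s₀ / (p - 1) * v) := by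
        rw [lintegral_mul_const' _ _ ENNReal.ofReal_ne_top, hint, setLIntegral_const,
          Real.volume_Ioc, sub_zero, ENNReal.ofReal_add (by positivity) (by positivity),
          ENNReal.ofReal_mul hμ.le, ENNReal.ofReal_mul (p := _ / _) (by positivity)]
    _ = _ := by
        rw [ENNReal.ofReal_rpow_of_pos hv, ENNReal.ofReal_rpow_of_pos hμ,
          ← ENNReal.ofReal_mul (by positivity), ← ENNReal.ofReal_mul (by positivity)]
        congr 1
        calc _ = μ * s₀ + (s₀ ^ (-p) * v) * s₀ / (p - 1) := by ring
          _ = μ * s₀ * (p / (p - 1)) := by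
            rw [hs₀p]
            field_simp
            ring
          _ = _ := by
            rw [hμs]
            ring

lemma setLIntegral_rieszKernel_le {n : ℕ} (hn : 3 ≤ n) (x : Rn n) (E : Set (Rn n)) :
    ∫⁻ z in E, rieszKernel x z ≤
      volume (Metric.ball (0 : Rn n) 1) ^ (((n : ℝ) - 2) / n) * ((n : ℝ≥0∞) / 2) *
        volume E ^ (2 / (n : ℝ)) := by
  have hn' : (3 : ℝ) ≤ n := by exact_mod_cast hn
  have h2 : 0 < (n : ℝ) - 2 := by linarith
  have hV : volume (Metric.ball (0 : Rn n) 1) =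
      ENNReal.ofReal (volume (Metric.ball (0 : Rn n) 1)).toReal :=
    (ENNReal.ofReal_toReal measure_ball_lt_top.ne).symm
  have hv : 0 < (volume (Metric.ball (0 : Rn n) 1)).toReal :=
    ENNReal.toReal_pos (Metric.measure_ball_pos _ _ one_pos).ne' measure_ball_lt_top.ne
  have hp : 1 < (n : ℝ) / ((n : ℝ) - 2) := by
    rw [one_lt_div h2]
    linarith
  have hmeas : Measurable fun z : Rn n => (‖x - z‖ ^ (n - 2))⁻¹ := by fun_prop
  unfold rieszKernel
  rw [lintegral_eq_lintegral_meas_lt _ (Eventually.of_forall fun z => by positivity)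
    hmeas.aemeasurable]
  calc _ ≤ ∫⁻ s in Set.Ioi (0 : ℝ), min (volume E)
        (ENNReal.ofReal (s ^ (-((n : ℝ) / ((n : ℝ) - 2)))) *
          ENNReal.ofReal (volume (Metric.ball (0 : Rn n) 1)).toReal) := by
        refine setLIntegral_mono' measurableSet_Ioi fun s hs => ?_
        rw [Measure.restrict_apply (measurableSet_lt measurable_const hmeas), ← hV,
          ← volume_superlevel_rieszKernel hn x hs]
        exact le_min (measure_mono Set.inter_subset_right) (measure_mono Set.inter_subset_left)
    _ ≤ _ := lintegral_min_rpow_le hp hv _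
    _ = _ := by
        rw [← hV]
        congr 2
        · rw [one_div_div]
        · rw [← ENNReal.ofReal_natCast, ← ENNReal.ofReal_ofNat,
            ← ENNReal.ofReal_div_of_pos two_pos]
          congr 1
          field_simp
          ring
        · field_simp
          ring

lemma volume_ball_rpow_le_lorentzNorm {n : ℕ} (hn : 3 ≤ n) :
    volume (Metric.ball (0 : Rn n) 1) ^ (((n : ℝ) - 2) / n) ≤
      lorentzNorm (fun v : Rn n => (((‖v‖ ^ (n - 2))⁻¹ : ℝ) : ℂ))
        ((n : ℝ≥0∞) / ((n : ℝ≥0∞) - 2)) ∞ := by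
  have hsub : (n : ℝ≥0∞) - 2 = ((n - 2 : ℕ) : ℝ≥0∞) := by simp
  have htop : (n : ℝ≥0∞) / ((n : ℝ≥0∞) - 2) ≠ ∞ := by
    rw [hsub]
    exact ENNReal.div_ne_top (ENNReal.natCast_ne_top n) (by exact_mod_cast (by omega : n - 2 ≠ 0))
  have hreal : ((n : ℝ≥0∞) / ((n : ℝ≥0∞) - 2)).toReal = (n : ℝ) / ((n : ℝ) - 2) := by
    rw [hsub, ENNReal.toReal_div, ENNReal.toReal_natCast, ENNReal.toReal_natCast, cast_sub_two hn]
  rw [lorentzNorm, if_pos rfl, if_neg htop, hreal, one_div_div]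
  refine le_trans (le_of_eq ?_) (le_iSup₂ (f := fun (t : ℝ) (_ : 0 < t) => _) 1 one_pos)
  have := volume_superlevel_rieszKernel hn (0 : Rn n) one_pos
  simp only [zero_sub, norm_neg, Real.one_rpow, ENNReal.ofReal_one, one_mul] at this
  simp only [distFun, ENNReal.ofReal_one, one_mul, ← this, Complex.norm_real, norm_inv, norm_pow,
    norm_norm]

lemma lorentzNorm_half_one {n : ℕ} (W : Rn n → ℂ) :
    lorentzNorm W ((n : ℝ≥0∞) / 2) 1 =
      (n : ℝ≥0∞) / 2 * ∫⁻ t in Set.Ioi (0 : ℝ), distFun W t ^ (2 / (n : ℝ)) := by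
  simp [lorentzNorm, ENNReal.toReal_div]

/-- Hölder's inequality between `L^{n/(n-2),∞}` and `L^{n/2,1}` for the kernel `|x - z|^{2-n}`. -/
lemma lintegral_rieszKernel_mul_le {n : ℕ} (hn : 3 ≤ n) {W : Rn n → ℂ}
    (hW : AEStronglyMeasurable W volume) (x : Rn n) :
    ∫⁻ z, rieszKernel x z * ‖W z‖ₑ ≤
      lorentzNorm (fun v : Rn n => (((‖v‖ ^ (n - 2))⁻¹ : ℝ) : ℂ))
        ((n : ℝ≥0∞) / ((n : ℝ≥0∞) - 2)) ∞ * lorentzNorm W ((n : ℝ≥0∞) / 2) 1 := by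
  have hne : volume (Metric.ball (0 : Rn n) 1) ^ (((n : ℝ) - 2) / n) * ((n : ℝ≥0∞) / 2) ≠ ∞ := by
    have hn' : (3 : ℝ) ≤ n := by exact_mod_cast hn
    refine ENNReal.mul_ne_top (ENNReal.rpow_ne_top_of_nonneg
      (div_nonneg (by linarith) (by linarith)) measure_ball_lt_top.ne)
      (ENNReal.div_ne_top (ENNReal.natCast_ne_top n) two_ne_zero)
  have hac := withDensity_absolutelyContinuous (volume : Measure (Rn n)) (rieszKernel x)
  calc ∫⁻ z, rieszKernel x z * ‖W z‖ₑ
      = ∫⁻ z, ENNReal.ofReal ‖W z‖ ∂(volume.withDensity (rieszKernel x)) := by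
        rw [lintegral_withDensity_eq_lintegral_mul₀ (measurable_rieszKernel x).aemeasurable
          hW.norm.aemeasurable.ennreal_ofReal]
        simp only [Pi.mul_apply, ofReal_norm]
    _ = ∫⁻ t in Set.Ioi (0 : ℝ), ∫⁻ z in {z | t < ‖W z‖}, rieszKernel x z := by
        rw [lintegral_eq_lintegral_meas_lt _ (Eventually.of_forall fun z => norm_nonneg _)
          (hW.norm.aemeasurable.mono_ac hac)]
        simp only [withDensity_apply']
    _ ≤ ∫⁻ t in Set.Ioi (0 : ℝ),
          volume (Metric.ball (0 : Rn n) 1) ^ (((n : ℝ) - 2) / n) * ((n : ℝ≥0∞) / 2) *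
            distFun W t ^ (2 / (n : ℝ)) :=
        lintegral_mono fun t => setLIntegral_rieszKernel_le hn x _
    _ = volume (Metric.ball (0 : Rn n) 1) ^ (((n : ℝ) - 2) / n) *
          lorentzNorm W ((n : ℝ≥0∞) / 2) 1 := by
        rw [lintegral_const_mul' _ _ hne, lorentzNorm_half_one, mul_assoc]
    _ ≤ _ := by
        gcongr
        exact volume_ball_rpow_le_lorentzNorm hn

lemma rieszKernel_mul_le {n : ℕ} {x y z : Rn n} (hxy : x ≠ y) (hxz : z ≠ x) (hyz : z ≠ y) :
    rieszKernel x z * rieszKernel y z ≤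
      2 ^ (n - 2) * rieszKernel x y * (rieszKernel x z + rieszKernel y z) := by
  have hd : 0 < ‖x - y‖ := norm_pos_iff.2 (sub_ne_zero.2 hxy)
  have hu : 0 < ‖x - z‖ := norm_pos_iff.2 (sub_ne_zero.2 hxz.symm)
  have hw : 0 < ‖y - z‖ := norm_pos_iff.2 (sub_ne_zero.2 hyz.symm)
  have htri : ‖x - y‖ ≤ ‖x - z‖ + ‖y - z‖ := by
    simpa [norm_sub_rev] using norm_sub_le (x - z) (y - z)
  have hpow : ‖x - y‖ ^ (n - 2) ≤ 2 ^ (n - 2) * (‖x - z‖ ^ (n - 2) + ‖y - z‖ ^ (n - 2)) :=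
    calc _ ≤ (‖x - z‖ + ‖y - z‖) ^ (n - 2) := by gcongr
      _ ≤ 2 ^ (n - 2 - 1) * (‖x - z‖ ^ (n - 2) + ‖y - z‖ ^ (n - 2)) :=
        add_pow_le hu.le hw.le _
      _ ≤ _ := mul_le_mul_of_nonneg_right
        (pow_le_pow_right₀ one_le_two (Nat.sub_le _ _)) (by positivity)
  have h2 : (2 : ℝ≥0∞) ^ (n - 2) = ENNReal.ofReal (2 ^ (n - 2)) := by
    rw [ENNReal.ofReal_pow zero_le_two, ENNReal.ofReal_ofNat]
  unfold rieszKernel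
  rw [h2, ← ENNReal.ofReal_mul (by positivity), ← ENNReal.ofReal_mul (by positivity),
    ← ENNReal.ofReal_add (by positivity) (by positivity), ← ENNReal.ofReal_mul (by positivity)]
  refine ENNReal.ofReal_le_ofReal ?_
  have hd' := pow_pos hd (n - 2)
  have hu' := pow_pos hu (n - 2)
  have hw' := pow_pos hw (n - 2)
  generalize ‖x - y‖ ^ (n - 2) = d at *
  generalize ‖x - z‖ ^ (n - 2) = u at *
  generalize ‖y - z‖ ^ (n - 2) = w at *
  calc u⁻¹ * w⁻¹ = d * (d⁻¹ * u⁻¹ * w⁻¹) := by field_simp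
    _ ≤ 2 ^ (n - 2) * (u + w) * (d⁻¹ * u⁻¹ * w⁻¹) := by gcongr
    _ = _ := by
      field_simp
      ring

lemma fundConst_nonneg {n : ℕ} (hn : 3 ≤ n) : 0 ≤ fundConst n := by
  have hn' : (3 : ℝ) ≤ n := by exact_mod_cast hn
  have : 0 ≤ (n : ℝ) - 2 := by linarith
  unfold fundConst
  positivity

lemma enorm_fundConst {n : ℕ} (hn : 3 ≤ n) :
    ‖(fundConst n : ℂ)‖ₑ = ENNReal.ofReal (fundConst n) := by
  rw [← ofReal_norm, Complex.norm_real, Real.norm_of_nonneg (fundConst_nonneg hn)]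

lemma enorm_ofReal_inv_pow {n : ℕ} (x z : Rn n) :
    ‖(((‖x - z‖ ^ (n - 2))⁻¹ : ℝ) : ℂ)‖ₑ = rieszKernel x z := by
  rw [← ofReal_norm, Complex.norm_real, Real.norm_of_nonneg (by positivity), rieszKernel]

lemma enorm_greenIter_zero {n : ℕ} (hn : 3 ≤ n) (W : Rn n → ℂ) (x y : Rn n) :
    ‖greenIter n W 0 x y‖ₑ = ENNReal.ofReal (fundConst n) * rieszKernel x y := by
  rw [greenIter, enorm_mul, enorm_fundConst hn, enorm_ofReal_inv_pow]

lemma lintegral_rieszKernel_mul_rieszKernel_le {n : ℕ} (hn : 3 ≤ n) {W : Rn n → ℂ}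
    (hW : AEStronglyMeasurable W volume) {x y : Rn n} (hxy : x ≠ y) :
    ∫⁻ z, rieszKernel x z * ‖W z‖ₑ * rieszKernel y z ≤
      2 ^ (n - 1) * (lorentzNorm (fun v : Rn n => (((‖v‖ ^ (n - 2))⁻¹ : ℝ) : ℂ))
        ((n : ℝ≥0∞) / ((n : ℝ≥0∞) - 2)) ∞ * lorentzNorm W ((n : ℝ≥0∞) / 2) 1) *
        rieszKernel x y := by
  have : Nonempty (Fin n) := ⟨⟨0, by omega⟩⟩
  have hm : ∀ x : Rn n, AEMeasurable (fun z => rieszKernel x z * ‖W z‖ₑ) volume := fun x =>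
    (measurable_rieszKernel x).aemeasurable.mul hW.enorm
  calc _ ≤ ∫⁻ z, 2 ^ (n - 2) * rieszKernel x y *
          (rieszKernel x z * ‖W z‖ₑ + rieszKernel y z * ‖W z‖ₑ) := by
        refine lintegral_mono_ae ?_
        filter_upwards [Measure.ae_ne volume x, Measure.ae_ne volume y] with z hzx hzy
        calc _ = rieszKernel x z * rieszKernel y z * ‖W z‖ₑ := by ring
          _ ≤ 2 ^ (n - 2) * rieszKernel x y * (rieszKernel x z + rieszKernel y z) * ‖W z‖ₑ := by
            exact mul_le_mul_left (rieszKernel_mul_le hxy hzx hzy) _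
          _ = _ := by ring
    _ = 2 ^ (n - 2) * rieszKernel x y *
          ((∫⁻ z, rieszKernel x z * ‖W z‖ₑ) + ∫⁻ z, rieszKernel y z * ‖W z‖ₑ) := by
        rw [lintegral_const_mul'' _ ((hm x).fun_add (hm y)), lintegral_add_left' (hm x)]
    _ ≤ 2 ^ (n - 2) * rieszKernel x y * (_ + _) :=
        mul_le_mul_right (add_le_add (lintegral_rieszKernel_mul_le hn hW x)
          (lintegral_rieszKernel_mul_le hn hW y)) _
    _ = _ := by
        rw [show n - 1 = n - 2 + 1 by omega, pow_succ]
        ring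

/-- For `n ≥ 3` and `W ∈ L^{n/2,1}(ℝⁿ)`, the iterated kernels satisfy
`|G_j(x,y)| ≤ C^j G_0(x,y)` for all `j` and `x ≠ y`, where
`C = 2^{n-1} c_n ‖a‖_{n/(n-2),∞} ‖W‖_{n/2,1}` and `a(x) = |x|^{-(n-2)}`. -/
theorem greenIter_bound
    (n : ℕ) (hn : 3 ≤ n) (W : Rn n → ℂ)
    (hW : MemLorentz W ((n : ℝ≥0∞) / 2) 1)
    (j : ℕ) (x y : Rn n) (hxy : x ≠ y) :
    (‖greenIter n W j x y‖₊ : ℝ≥0∞) ≤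
      greenC n W ^ j * (‖greenIter n W 0 x y‖₊ : ℝ≥0∞) := by
  change ‖greenIter n W j x y‖ₑ ≤ greenC n W ^ j * ‖greenIter n W 0 x y‖ₑ
  have : Nonempty (Fin n) := ⟨⟨0, by omega⟩⟩
  have hWm := hW.1
  induction j generalizing x with
  | zero => simp
  | succ j ih =>
    have hm : AEMeasurable (fun z => rieszKernel x z * ‖W z‖ₑ * rieszKernel y z) volume :=
      ((measurable_rieszKernel x).aemeasurable.mul hWm.enorm).mul
        (measurable_rieszKernel y).aemeasurable
    rw [enorm_greenIter_zero hn, greenIter, enorm_mul, enorm_fundConst hn]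
    calc _ ≤ ENNReal.ofReal (fundConst n) * ∫⁻ z,
          (greenC n W ^ j * ENNReal.ofReal (fundConst n)) *
            (rieszKernel x z * ‖W z‖ₑ * rieszKernel y z) := by
          gcongr
          refine (enorm_integral_le_lintegral_enorm _).trans (lintegral_mono_ae ?_)
          filter_upwards [Measure.ae_ne volume y] with z hzy
          rw [enorm_mul, enorm_mul, enorm_ofReal_inv_pow]
          calc _ ≤ rieszKernel x z * ‖W z‖ₑ *
                (greenC n W ^ j * (ENNReal.ofReal (fundConst n) * rieszKernel z y)) := by
                gcongr
                rw [← enorm_greenIter_zero hn W]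
                exact ih z hzy
            _ = _ := by
                rw [rieszKernel_comm z y]
                ring
      _ = ENNReal.ofReal (fundConst n) * (greenC n W ^ j * ENNReal.ofReal (fundConst n) *
            ∫⁻ z, rieszKernel x z * ‖W z‖ₑ * rieszKernel y z) := by
          rw [lintegral_const_mul'' _ hm]
      _ ≤ ENNReal.ofReal (fundConst n) * (greenC n W ^ j * ENNReal.ofReal (fundConst n) * _) :=
          mul_le_mul_right (mul_le_mul_right
            (lintegral_rieszKernel_mul_rieszKernel_le hn hWm hxy) _) _
      _ = _ := by
          rw [pow_succ, greenC, ENNReal.ofReal_mul (by positivity),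
            ENNReal.ofReal_pow zero_le_two, ENNReal.ofReal_ofNat]
          ring
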